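/- (Lemma 1) For every integer k ≥ 2: ∂ Tr(θΘ^{k−1}) = Tr(θ²Θ^{k−1}), and moreover Tr(θ²Θ^{k−1}) = ∂̄ ω_{k+1,k−2}, where ω_{k+1,k−2} = (1/(k+1)) Tr(θ(θ²Θ^{k−2} + Θθ²Θ^{k−3} + ⋯ + Θ^{k−3}θ²Θ + Θ^{k−2}θ²)) = (1/(k+1)) Σ_{i=0}^{k−2} Tr(θ Θ^i θ² Θ^{k−2−i}). -/

import Mathlib

/-- An abstract model of the Dolbeault double complex of `(p,q)`-forms on a complex
manifold: a bigraded associative `ℂ`-algebra `Ω = ⨁ Ω^{p,q}`, graded-commutative with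
respect to total degree, with `ℂ`-linear operators `∂` (`pd`) and `∂̄` (`pdb`) of
bidegrees `(1,0)` and `(0,1)`, squaring to zero and anticommuting, satisfying the
graded Leibniz rule. -/
structure DolbeaultAlgebra (Ω : Type*) [Ring Ω] [Algebra ℂ Ω] where
  /-- the `ℂ`-subspace of elements of bidegree `(p,q)` -/
  deg : ℕ → ℕ → Submodule ℂ Ω
  one_mem : (1 : Ω) ∈ deg 0 0
  mul_mem : ∀ {p q p' q'} {a b : Ω}, a ∈ deg p q → b ∈ deg p' q' →
    a * b ∈ deg (p + p') (q + q')
  gcomm : ∀ {p q p' q'} (a b : Ω), a ∈ deg p q → b ∈ deg p' q' →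
    a * b = ((-1 : ℂ) ^ ((p + q) * (p' + q'))) • (b * a)
  /-- the operator `∂` -/
  pd : Ω →ₗ[ℂ] Ω
  /-- the operator `∂̄` -/
  pdb : Ω →ₗ[ℂ] Ω
  pd_mem : ∀ {p q} {a : Ω}, a ∈ deg p q → pd a ∈ deg (p + 1) q
  pdb_mem : ∀ {p q} {a : Ω}, a ∈ deg p q → pdb a ∈ deg p (q + 1)
  pd_pd : ∀ a : Ω, pd (pd a) = 0
  pdb_pdb : ∀ a : Ω, pdb (pdb a) = 0
  pd_pdb : ∀ a : Ω, pd (pdb a) + pdb (pd a) = 0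
  pd_leibniz : ∀ {p q} (a b : Ω), a ∈ deg p q →
    pd (a * b) = pd a * b + ((-1 : ℂ) ^ (p + q)) • (a * pd b)
  pdb_leibniz : ∀ {p q} (a b : Ω), a ∈ deg p q →
    pdb (a * b) = pdb a * b + ((-1 : ℂ) ^ (p + q)) • (a * pdb b)

namespace DolbeaultAlgebra

variable {Ω : Type*} [Ring Ω] [Algebra ℂ Ω] {r : ℕ}

/-- the entrywise extension of `∂` to `r × r` matrices over `Ω` -/
def mpd (A : DolbeaultAlgebra Ω) (M : Matrix (Fin r) (Fin r) Ω) :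
    Matrix (Fin r) (Fin r) Ω := M.map A.pd

/-- the entrywise extension of `∂̄` to `r × r` matrices over `Ω` -/
def mpdb (A : DolbeaultAlgebra Ω) (M : Matrix (Fin r) (Fin r) Ω) :
    Matrix (Fin r) (Fin r) Ω := M.map A.pdb

/-- the assertion that all entries of a matrix lie in `Ω^{p,q}` -/
def MatDeg (A : DolbeaultAlgebra Ω) (p q : ℕ) (M : Matrix (Fin r) (Fin r) Ω) : Prop :=
  ∀ i j, M i j ∈ A.deg p q

end DolbeaultAlgebra

variable {Ω : Type*} [Ring Ω] [Algebra ℂ Ω]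

/-!
Write `[M, N] = MN - NM`. Applying `∂̄` to `∂θ = -θ²` gives the Bianchi identity `∂Θ = [Θ, θ]`,
hence `∂(Θⁿ) = [Θⁿ, θ]`; together with `Tr(θΘⁿθ) = -Tr(θ²Θⁿ)` this gives the first formula.

For the second, `∂̄Θ = 0` and `∂̄(θ²) = [Θ, θ]`, so, by cyclicity of the trace,
`∂̄ Tr(θ Θ^i θ² Θ^(n-1-i)) = Tr(θ²Θⁿ) + X_i - X_(i+1)` with `X_i = Tr(θ Θ^i θ Θ^(n-i))`.
Summing over `i < n` telescopes to `n Tr(θ²Θⁿ) + X_0 - X_n`, where `X_0 = Tr(θ²Θⁿ) = -X_n`.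
-/

namespace DolbeaultAlgebra

variable {r : ℕ} {A : DolbeaultAlgebra Ω} {M N X θ Θ : Matrix (Fin r) (Fin r) Ω} {p q p' q' : ℕ}

theorem MatDeg.mul (hM : A.MatDeg p q M) (hN : A.MatDeg p' q' N) :
    A.MatDeg (p + p') (q + q') (M * N) := fun i j => by
  rw [Matrix.mul_apply]
  exact Submodule.sum_mem _ fun x _ => A.mul_mem (hM i x) (hN x j)

theorem MatDeg.mpdb (hM : A.MatDeg p q M) : A.MatDeg p (q + 1) (A.mpdb M) :=
  fun i j => A.pdb_mem (hM i j)

theorem MatDeg.trace_mul_comm (hM : A.MatDeg p q M) (hN : A.MatDeg p' q' N) :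
    (M * N).trace = (-1 : ℂ) ^ ((p + q) * (p' + q')) • (N * M).trace := by
  simp only [Matrix.trace, Matrix.diag_apply, Matrix.mul_apply, Finset.smul_sum]
  rw [Finset.sum_comm]
  exact Finset.sum_congr rfl fun x _ => Finset.sum_congr rfl fun y _ =>
    A.gcomm _ _ (hM y x) (hN x y)

/-- A matrix of forms, bihomogeneous of even total degree. Together with `IsOdd` it records the
only information about degrees on which the signs in the Leibniz rule and in the cyclicity of the
trace depend. -/
def IsEven (A : DolbeaultAlgebra Ω) (M : Matrix (Fin r) (Fin r) Ω) : Prop :=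
  ∃ p q, Even (p + q) ∧ A.MatDeg p q M

/-- A matrix of forms, bihomogeneous of odd total degree; the counterpart of `IsEven`. -/
def IsOdd (A : DolbeaultAlgebra Ω) (M : Matrix (Fin r) (Fin r) Ω) : Prop :=
  ∃ p q, Odd (p + q) ∧ A.MatDeg p q M

theorem IsEven.one : A.IsEven (1 : Matrix (Fin r) (Fin r) Ω) := by
  refine ⟨0, 0, Even.zero, fun i j => ?_⟩
  rw [Matrix.one_apply]
  split_ifs
  exacts [A.one_mem, Submodule.zero_mem _]

theorem IsEven.mul (hM : A.IsEven M) (hN : A.IsEven N) : A.IsEven (M * N) := by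
  obtain ⟨p, q, hpq, hM⟩ := hM
  obtain ⟨p', q', hpq', hN⟩ := hN
  exact ⟨_, _, add_add_add_comm p q p' q' ▸ hpq.add hpq', hM.mul hN⟩

theorem IsEven.pow (hM : A.IsEven M) (n : ℕ) : A.IsEven (M ^ n) := by
  induction n with
  | zero => exact pow_zero M ▸ IsEven.one
  | succ n ih => exact pow_succ M n ▸ ih.mul hM

theorem IsOdd.mul (hM : A.IsOdd M) (hN : A.IsOdd N) : A.IsEven (M * N) := by
  obtain ⟨p, q, hpq, hM⟩ := hM
  obtain ⟨p', q', hpq', hN⟩ := hN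
  exact ⟨_, _, add_add_add_comm p q p' q' ▸ hpq.add_odd hpq', hM.mul hN⟩

theorem IsOdd.mul_isEven (hM : A.IsOdd M) (hN : A.IsEven N) : A.IsOdd (M * N) := by
  obtain ⟨p, q, hpq, hM⟩ := hM
  obtain ⟨p', q', hpq', hN⟩ := hN
  exact ⟨_, _, add_add_add_comm p q p' q' ▸ hpq.add_even hpq', hM.mul hN⟩

theorem IsEven.trace_mul_comm (hM : A.IsEven M) (hN : A.MatDeg p q N) :
    (M * N).trace = (N * M).trace := by
  obtain ⟨_, _, h, hM⟩ := hM
  rw [hM.trace_mul_comm hN, (h.mul_right _).neg_one_pow, one_smul]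

theorem IsOdd.trace_mul_comm (hM : A.IsOdd M) (hN : A.IsOdd N) :
    (M * N).trace = -(N * M).trace := by
  obtain ⟨_, _, h, hM⟩ := hM
  obtain ⟨_, _, h', hN⟩ := hN
  rw [hM.trace_mul_comm hN, (h.mul h').neg_one_pow, neg_one_smul]

theorem IsOdd.trace_mul_mul_self (hM : A.IsOdd M) (hN : A.IsEven N) :
    (M * N * M).trace = -(M ^ 2 * N).trace := by
  rw [(hM.mul_isEven hN).trace_mul_comm hM, ← mul_assoc, pow_two]

/-- The graded Leibniz rule with respect to total degree, satisfied by both `∂` and `∂̄`. As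
`D : Ω → Ω` is extended entrywise to matrices, `M.map D` is the common form of `A.mpd M` and
`A.mpdb M`. -/
def IsAntiderivation (A : DolbeaultAlgebra Ω) (D : Ω →ₗ[ℂ] Ω) : Prop :=
  ∀ {p q : ℕ} (a b : Ω), a ∈ A.deg p q → D (a * b) = D a * b + (-1 : ℂ) ^ (p + q) • (a * D b)

namespace IsAntiderivation

variable {D : Ω →ₗ[ℂ] Ω}

theorem map_one (hD : A.IsAntiderivation D) : D 1 = 0 := by
  simpa using hD 1 1 A.one_mem

theorem matrix_map_one (hD : A.IsAntiderivation D) :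
    (1 : Matrix (Fin r) (Fin r) Ω).map D = 0 := by
  rw [← Matrix.diagonal_one, Matrix.diagonal_map (map_zero D), hD.map_one, Matrix.diagonal_zero]

theorem matrix_map_mul (hD : A.IsAntiderivation D) (hM : A.MatDeg p q M)
    (N : Matrix (Fin r) (Fin r) Ω) :
    (M * N).map D = M.map D * N + (-1 : ℂ) ^ (p + q) • (M * N.map D) := by
  ext i j
  simp only [Matrix.map_apply, Matrix.mul_apply, Matrix.add_apply, Matrix.smul_apply,
    map_sum, Finset.smul_sum, ← Finset.sum_add_distrib]
  exact Finset.sum_congr rfl fun x _ => hD _ _ (hM i x)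

theorem matrix_map_mul_of_isEven (hD : A.IsAntiderivation D) (hM : A.IsEven M)
    (N : Matrix (Fin r) (Fin r) Ω) : (M * N).map D = M.map D * N + M * N.map D := by
  obtain ⟨_, _, h, hM⟩ := hM
  rw [hD.matrix_map_mul hM, h.neg_one_pow, one_smul]

theorem matrix_map_mul_of_isOdd (hD : A.IsAntiderivation D) (hM : A.IsOdd M)
    (N : Matrix (Fin r) (Fin r) Ω) : (M * N).map D = M.map D * N - M * N.map D := by
  obtain ⟨_, _, h, hM⟩ := hM
  rw [hD.matrix_map_mul hM, h.neg_one_pow, neg_one_smul, sub_eq_add_neg]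

theorem matrix_map_pow_of_map_eq_commutator (hD : A.IsAntiderivation D) (hM : A.IsEven M)
    (h : M.map D = M * X - X * M) (n : ℕ) : (M ^ n).map D = M ^ n * X - X * M ^ n := by
  induction n with
  | zero => simp [hD.matrix_map_one]
  | succ n ih =>
    rw [pow_succ, hD.matrix_map_mul_of_isEven (hM.pow n), ih, h]
    noncomm_ring

theorem matrix_map_pow_eq_zero (hD : A.IsAntiderivation D) (hM : A.IsEven M)
    (h : M.map D = 0) (n : ℕ) : (M ^ n).map D = 0 := by
  simpa using hD.matrix_map_pow_of_map_eq_commutator (X := 0) hM (by simpa using h) n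

theorem map_trace_mul_pow (hD : A.IsAntiderivation D) (hθ : A.IsOdd θ) (hΘ : A.IsEven Θ)
    (hDθ : θ.map D = -(θ * θ)) (hDΘ : Θ.map D = Θ * θ - θ * Θ) (n : ℕ) :
    D (θ * Θ ^ n).trace = (θ ^ 2 * Θ ^ n).trace := by
  have hDpow : (θ * Θ ^ n).map D = -(θ * Θ ^ n * θ) := by
    rw [hD.matrix_map_mul_of_isOdd hθ, hDθ, hD.matrix_map_pow_of_map_eq_commutator hΘ hDΘ]
    noncomm_ring
  rw [AddMonoidHom.map_trace, hDpow, Matrix.trace_neg, hθ.trace_mul_mul_self (hΘ.pow n), neg_neg]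

theorem matrix_map_mul_pow_mul_sq_mul_pow (hD : A.IsAntiderivation D) (hθ : A.IsOdd θ)
    (hΘ : A.IsEven Θ) (hDθ : θ.map D = Θ) (hDΘ : Θ.map D = 0) (i j : ℕ) :
    (θ * Θ ^ i * θ ^ 2 * Θ ^ j).map D =
      Θ ^ (i + 1) * (θ ^ 2 * Θ ^ j) +
        (θ * Θ ^ i * θ * Θ ^ (j + 1) - θ * Θ ^ (i + 1) * θ * Θ ^ j) := by
  have hodd : A.IsOdd (θ * Θ ^ i) := hθ.mul_isEven (hΘ.pow i)
  have heven : A.IsEven (θ ^ 2) := pow_two θ ▸ hθ.mul hθ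
  have hDpow := hD.matrix_map_pow_eq_zero hΘ hDΘ
  have hDsq : (θ ^ 2).map D = Θ * θ - θ * Θ := by
    rw [pow_two, hD.matrix_map_mul_of_isOdd hθ, hDθ]
  have hDodd : (θ * Θ ^ i).map D = Θ ^ (i + 1) := by
    rw [hD.matrix_map_mul_of_isOdd hθ, hDθ, hDpow, mul_zero, sub_zero, pow_succ']
  rw [mul_assoc _ (θ ^ 2), hD.matrix_map_mul_of_isOdd hodd, hD.matrix_map_mul_of_isEven heven,
    hDpow, hDodd, hDsq, pow_succ Θ i, pow_succ' Θ j]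
  noncomm_ring

theorem map_trace_mul_pow_mul_sq_mul_pow (hD : A.IsAntiderivation D) (hθ : A.IsOdd θ)
    (hΘ : A.IsEven Θ) (hDθ : θ.map D = Θ) (hDΘ : Θ.map D = 0) (i j : ℕ) :
    D (θ * Θ ^ i * θ ^ 2 * Θ ^ j).trace =
      (θ ^ 2 * Θ ^ (i + j + 1)).trace +
        ((θ * Θ ^ i * θ * Θ ^ (j + 1)).trace - (θ * Θ ^ (i + 1) * θ * Θ ^ j).trace) := by
  have hcycle : (Θ ^ (i + 1) * (θ ^ 2 * Θ ^ j)).trace = (θ ^ 2 * Θ ^ (i + j + 1)).trace := by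
    obtain ⟨_, _, _, hdeg⟩ := (hθ.mul hθ).mul (hΘ.pow j)
    rw [pow_two, (hΘ.pow (i + 1)).trace_mul_comm hdeg, mul_assoc, ← pow_add,
      add_left_comm, add_assoc]
  rw [AddMonoidHom.map_trace, hD.matrix_map_mul_pow_mul_sq_mul_pow hθ hΘ hDθ hDΘ,
    Matrix.trace_add, Matrix.trace_sub, hcycle]

theorem map_sum_trace_mul_pow_mul_sq_mul_pow (hD : A.IsAntiderivation D) (hθ : A.IsOdd θ)
    (hΘ : A.IsEven Θ) (hDθ : θ.map D = Θ) (hDΘ : Θ.map D = 0) (n : ℕ) :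
    D (∑ i ∈ Finset.range n, (θ * Θ ^ i * θ ^ 2 * Θ ^ (n - 1 - i)).trace) =
      (n + 2) • (θ ^ 2 * Θ ^ n).trace := by
  let X (i : ℕ) : Ω := (θ * Θ ^ i * θ * Θ ^ (n - i)).trace
  have hterm : ∀ i ∈ Finset.range n, D (θ * Θ ^ i * θ ^ 2 * Θ ^ (n - 1 - i)).trace =
      (θ ^ 2 * Θ ^ n).trace + (X i - X (i + 1)) := fun i hi => by
    have hin := Finset.mem_range.1 hi
    rw [hD.map_trace_mul_pow_mul_sq_mul_pow hθ hΘ hDθ hDΘ,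
      show i + (n - 1 - i) + 1 = n by lia, show n - 1 - i + 1 = n - i by lia,
      show n - 1 - i = n - (i + 1) by lia]
  have hX_zero : X 0 = (θ ^ 2 * Θ ^ n).trace := by simp [X, pow_two]
  have hX_last : X n = -(θ ^ 2 * Θ ^ n).trace := by
    simpa [X] using hθ.trace_mul_mul_self (hΘ.pow n)
  rw [map_sum, Finset.sum_congr rfl hterm, Finset.sum_add_distrib, Finset.sum_range_sub',
    Finset.sum_const, Finset.card_range, hX_zero, hX_last]
  module

end IsAntiderivation

theorem mpdb_mpdb (A : DolbeaultAlgebra Ω) (M : Matrix (Fin r) (Fin r) Ω) :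
    A.mpdb (A.mpdb M) = 0 :=
  Matrix.ext fun i j => A.pdb_pdb (M i j)

theorem mpd_mpdb (A : DolbeaultAlgebra Ω) (M : Matrix (Fin r) (Fin r) Ω) :
    A.mpd (A.mpdb M) = -A.mpdb (A.mpd M) :=
  Matrix.ext fun i j => eq_neg_of_add_eq_zero_left (A.pd_pdb (M i j))

theorem bianchi_identity (hθ : A.IsOdd θ) (hθpd : A.mpd θ = -(θ * θ)) :
    A.mpd (A.mpdb θ) = A.mpdb θ * θ - θ * A.mpdb θ := by
  have hmul : A.mpdb (θ * θ) = A.mpdb θ * θ - θ * A.mpdb θ :=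
    IsAntiderivation.matrix_map_mul_of_isOdd A.pdb_leibniz hθ θ
  have hneg : A.mpdb (-(θ * θ)) = -A.mpdb (θ * θ) := Matrix.map_neg _ (map_neg A.pdb) _
  rw [mpd_mpdb, hθpd, hneg, neg_neg, hmul]

end DolbeaultAlgebra

/-- (Lemma 1) For every `k ≥ 2`: `∂Tr(θΘ^(k-1)) = Tr(θ²Θ^(k-1))`, and moreover
`Tr(θ²Θ^(k-1)) = ∂̄ω`, where
`ω = (1/(k+1)) ∑_{i=0}^{k-2} Tr(θ Θ^i θ² Θ^(k-2-i))`. -/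
theorem stmt2
    (A : DolbeaultAlgebra Ω) (r : ℕ) (hr : 1 ≤ r)
    (θ Θ : Matrix (Fin r) (Fin r) Ω)
    (hθdeg : A.MatDeg 1 0 θ) (hθpd : A.mpd θ = -(θ * θ)) (hΘ : Θ = A.mpdb θ)
    (k : ℕ) (hk : 2 ≤ k) :
    A.pd (Matrix.trace (θ * Θ ^ (k - 1))) = Matrix.trace (θ ^ 2 * Θ ^ (k - 1)) ∧
    Matrix.trace (θ ^ 2 * Θ ^ (k - 1)) =
      A.pdb ((((k : ℂ) + 1)⁻¹) •
        ∑ i ∈ Finset.range (k - 1), Matrix.trace (θ * Θ ^ i * θ ^ 2 * Θ ^ (k - 2 - i))) := by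
  have hpd : A.IsAntiderivation A.pd := A.pd_leibniz
  have hpdb : A.IsAntiderivation A.pdb := A.pdb_leibniz
  have hθ : A.IsOdd θ := ⟨1, 0, odd_one, hθdeg⟩
  have hΘeven : A.IsEven Θ := ⟨1, 1, even_two, hΘ ▸ hθdeg.mpdb⟩
  have hΘpd : A.mpd Θ = Θ * θ - θ * Θ := hΘ ▸ DolbeaultAlgebra.bianchi_identity hθ hθpd
  have hΘpdb : A.mpdb Θ = 0 := hΘ ▸ A.mpdb_mpdb θ
  obtain ⟨n, rfl⟩ : ∃ n, k = n + 1 := Nat.exists_eq_succ_of_ne_zero (by lia)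
  have hn : ((n + 1 : ℕ) : ℂ) + 1 ≠ 0 := Nat.cast_add_one_ne_zero _
  refine ⟨hpd.map_trace_mul_pow hθ hΘeven hθpd hΘpd n, ?_⟩
  rw [map_smul, eq_inv_smul_iff₀ hn, ← Nat.cast_add_one, Nat.cast_smul_eq_nsmul]
  exact (hpdb.map_sum_trace_mul_pow_mul_sq_mul_pow hθ hΘeven hΘ.symm hΘpdb n).symm
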